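/- (Proposition 1(ii).) The interpolant p^h(T,k) is a nondecreasing function of T on [0,1] for every fixed k ∈ [0,1] if and only if ρ_{i+1,j} ≥ ρ_{i,j} for all indices 0 ≤ i ≤ N−1 and 0 ≤ j ≤ N. -/

import Mathlib

/-- The 1D hat function with mesh `h` centered at `c`. -/
noncomputable def hat (h c t : ℝ) : ℝ := max (1 - |t - c| / h) 0

/-- The finite-dimensional hat-function interpolant `p^h` with mesh `h = 1/N`
and coefficients `ρ`. -/
noncomputable def interp (N : ℕ) (ρ : ℕ → ℕ → ℝ) (T k : ℝ) : ℝ :=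
  ∑ i ∈ Finset.range (N + 1), ∑ j ∈ Finset.range (N + 1),
    ρ i j * (hat (1 / N) ((i : ℝ) * (1 / N)) T * hat (1 / N) ((j : ℝ) * (1 / N)) k)

/-!
The interpolant is an iterated one-dimensional piecewise linear interpolant, first in `k` and then
in `T`. At a point of the grid interval the hat functions are the weights of a probability
distribution on the nodes. A hat is a difference of two consecutive shifted clamps, so prefix sums
of these weights telescope; they decrease as the point moves to the right, i.e. the distribution
shifts upwards in the stochastic order. By Abel summation, the mean of a nondecreasing nodal
sequence is then nondecreasing. Conversely, the interpolant takes the prescribed values at the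
nodes.
-/

open Finset

section PrefixSums

variable {R M : Type*} [Ring R] [PartialOrder R] [IsOrderedAddMonoid R]
  [AddCommGroup M] [PartialOrder M] [IsOrderedAddMonoid M] [Module R M] [PosSMulMono R M]

theorem sum_range_smul_le_sum_range_smul_of_prefix_sums_le {n : ℕ} {a : ℕ → R} {v w : ℕ → M}
    (ha : ∀ i < n, a i ≤ a (i + 1))
    (hprefix : ∀ m ≤ n, ∑ i ∈ range m, w i ≤ ∑ i ∈ range m, v i)
    (htotal : ∑ i ∈ range (n + 1), v i = ∑ i ∈ range (n + 1), w i) :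
    ∑ i ∈ range (n + 1), a i • v i ≤ ∑ i ∈ range (n + 1), a i • w i := by
  rw [sum_range_by_parts a v, sum_range_by_parts a w, htotal, Nat.add_sub_cancel]
  refine sub_le_sub_left (sum_le_sum fun i hi => ?_) _
  have hin : i < n := mem_range.1 hi
  exact smul_le_smul_of_nonneg_left (hprefix (i + 1) hin) (sub_nonneg.2 (ha i hin))

end PrefixSums

section Hat

variable {h : ℝ}

theorem hat_nonneg (h c t : ℝ) : 0 ≤ hat h c t := le_max_right _ _

theorem hat_self (h c : ℝ) : hat h c c = 1 := by simp [hat]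

theorem hat_eq_zero_of_le_abs_sub {c t : ℝ} (hh : 0 < h) (hct : h ≤ |t - c|) : hat h c t = 0 :=
  max_eq_right (sub_nonpos.2 ((one_le_div hh).2 hct))

theorem hat_node_eq_zero_of_ne {i m : ℕ} (hh : 0 < h) (him : i ≠ m) :
    hat h (i * h) (m * h) = 0 := by
  refine hat_eq_zero_of_le_abs_sub hh ?_
  have hdist : (1 : ℝ) ≤ |(m : ℝ) - i| := by
    exact_mod_cast Int.one_le_abs (sub_ne_zero.2 (Nat.cast_injective.ne him.symm))
  rw [← sub_mul, abs_mul, abs_of_pos hh]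
  exact le_mul_of_one_le_left hh.le hdist

theorem max_one_sub_abs_zero_eq_clamp_sub_clamp (y : ℝ) :
    max (1 - |y|) 0 = max 0 (min 1 (y + 1)) - max 0 (min 1 y) := by
  grind

theorem hat_eq_clamp_sub_clamp (hh : 0 ≤ h) (c t : ℝ) :
    hat h c t = max 0 (min 1 ((c - t) / h + 1)) - max 0 (min 1 ((c - t) / h)) := by
  rw [← max_one_sub_abs_zero_eq_clamp_sub_clamp, abs_div, abs_of_nonneg hh, abs_sub_comm, hat]

theorem sum_range_hat {t : ℝ} (hh : 0 < h) (ht : 0 ≤ t) (n : ℕ) :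
    ∑ i ∈ range n, hat h (i * h) t = max 0 (min 1 (n - t / h)) := by
  have hterm (i : ℕ) : hat h (i * h) t =
      max 0 (min 1 (((i + 1 : ℕ) : ℝ) - t / h)) - max 0 (min 1 ((i : ℝ) - t / h)) := by
    rw [hat_eq_clamp_sub_clamp hh.le, sub_div, mul_div_cancel_right₀ _ hh.ne', Nat.cast_succ,
      sub_add_eq_add_sub]
  have hzero : max 0 (min 1 (((0 : ℕ) : ℝ) - t / h)) = 0 := by
    rw [Nat.cast_zero, zero_sub]
    exact max_eq_left (min_le_of_right_le (neg_nonpos.2 (div_nonneg ht hh.le)))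
  rw [sum_congr rfl fun i _ => hterm i,
    sum_range_sub fun i : ℕ => max 0 (min 1 ((i : ℝ) - t / h)), hzero, sub_zero]

theorem antitoneOn_sum_range_hat (hh : 0 < h) (n : ℕ) :
    AntitoneOn (fun t => ∑ i ∈ range n, hat h (i * h) t) (Set.Ici 0) := by
  intro s hs t ht hst
  simp only [sum_range_hat hh hs, sum_range_hat hh ht]
  gcongr

theorem sum_range_succ_hat_eq_one {n : ℕ} {t : ℝ} (hh : 0 < h) (ht : t ∈ Set.Icc 0 (n * h)) :
    ∑ i ∈ range (n + 1), hat h (i * h) t = 1 := by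
  have hdiv : t / h ≤ n := (div_le_iff₀ hh).2 ht.2
  have hone : 1 ≤ ((n + 1 : ℕ) : ℝ) - t / h := by
    push_cast
    linarith
  rw [sum_range_hat hh ht.1, min_eq_left hone, max_eq_right zero_le_one]

end Hat

/-- The one-dimensional piecewise linear interpolant of the values `a 0, …, a n` at the nodes
`0, h, …, n * h`, written in the hat basis; `interp` iterates it over the two variables. -/
noncomputable def hatInterp (n : ℕ) (h : ℝ) (a : ℕ → ℝ) (t : ℝ) : ℝ :=
  ∑ i ∈ range (n + 1), a i * hat h (i * h) t

section HatInterp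

variable {n : ℕ} {h : ℝ} {a b : ℕ → ℝ}

theorem node_mem_Icc {i : ℕ} (hh : 0 ≤ h) (hi : i ≤ n) : (i * h : ℝ) ∈ Set.Icc 0 (n * h) :=
  ⟨by positivity, by gcongr⟩

theorem hatInterp_node {i : ℕ} (hh : 0 < h) (hi : i ≤ n) : hatInterp n h a (i * h) = a i := by
  rw [hatInterp, sum_eq_single_of_mem i (mem_range_succ_iff.2 hi), hat_self, mul_one]
  intro m _ hmi
  rw [hat_node_eq_zero_of_ne hh hmi, mul_zero]

theorem hatInterp_le_hatInterp (hab : ∀ i ≤ n, a i ≤ b i) (t : ℝ) :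
    hatInterp n h a t ≤ hatInterp n h b t :=
  sum_le_sum fun i hi =>
    mul_le_mul_of_nonneg_right (hab i (mem_range_succ_iff.1 hi)) (hat_nonneg _ _ _)

theorem forall_hatInterp_le_hatInterp_iff (hh : 0 < h) :
    (∀ t ∈ Set.Icc 0 (n * h), hatInterp n h a t ≤ hatInterp n h b t) ↔ ∀ i ≤ n, a i ≤ b i := by
  refine ⟨fun hle i hi => ?_, fun hab t _ => hatInterp_le_hatInterp hab t⟩
  simpa only [hatInterp_node hh hi] using hle (i * h) (node_mem_Icc hh.le hi)

theorem monotoneOn_hatInterp (hh : 0 < h) (ha : ∀ i < n, a i ≤ a (i + 1)) :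
    MonotoneOn (hatInterp n h a) (Set.Icc 0 (n * h)) := by
  intro s hs t ht hst
  refine sum_range_smul_le_sum_range_smul_of_prefix_sums_le ha (fun m _ => ?_) ?_
  · exact antitoneOn_sum_range_hat hh m hs.1 ht.1 hst
  · rw [sum_range_succ_hat_eq_one hh hs, sum_range_succ_hat_eq_one hh ht]

theorem monotoneOn_hatInterp_iff (hh : 0 < h) :
    MonotoneOn (hatInterp n h a) (Set.Icc 0 (n * h)) ↔ ∀ i < n, a i ≤ a (i + 1) := by
  refine ⟨fun hmono i hi => ?_, monotoneOn_hatInterp hh⟩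
  have hnodes : (i * h : ℝ) ≤ (i + 1 : ℕ) * h := by gcongr; exact i.le_succ
  simpa only [hatInterp_node hh hi.le, hatInterp_node hh hi] using
    hmono (node_mem_Icc hh.le hi.le) (node_mem_Icc hh.le hi) hnodes

theorem forall_monotoneOn_hatInterp_hatInterp_iff {m : ℕ} {h' : ℝ} {ρ : ℕ → ℕ → ℝ}
    (hh : 0 < h) (hh' : 0 < h') :
    (∀ k ∈ Set.Icc 0 (m * h'),
        MonotoneOn (hatInterp n h fun i => hatInterp m h' (ρ i) k) (Set.Icc 0 (n * h))) ↔
      ∀ i < n, ∀ j ≤ m, ρ i j ≤ ρ (i + 1) j :=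
  calc
    _ ↔ ∀ k ∈ Set.Icc 0 (m * h'), ∀ i < n,
          hatInterp m h' (ρ i) k ≤ hatInterp m h' (ρ (i + 1)) k :=
        forall₂_congr fun _ _ => monotoneOn_hatInterp_iff hh
    _ ↔ ∀ i < n, ∀ k ∈ Set.Icc 0 (m * h'),
          hatInterp m h' (ρ i) k ≤ hatInterp m h' (ρ (i + 1)) k :=
        ⟨fun H i hi k hk => H k hk i hi, fun H k hk i hi => H i hi k hk⟩
    _ ↔ _ := forall₂_congr fun _ _ => forall_hatInterp_le_hatInterp_iff hh'

end HatInterp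

theorem interp_eq_hatInterp_hatInterp (N : ℕ) (ρ : ℕ → ℕ → ℝ) (T k : ℝ) :
    interp N ρ T k = hatInterp N (1 / N) (fun i => hatInterp N (1 / N) (ρ i) k) T := by
  simp only [interp, hatInterp, sum_mul]
  exact sum_congr rfl fun i _ => sum_congr rfl fun j _ => by ring

/-- Proposition 1(ii): `p^h(T,k)` is nondecreasing in `T` on `[0,1]` for
every fixed `k ∈ [0,1]` iff `ρ_{i+1,j} ≥ ρ_{i,j}` for all `0 ≤ i ≤ N−1`, `0 ≤ j ≤ N`. -/
theorem interp_monotone_iff (N : ℕ) (hN : 1 ≤ N) (ρ : ℕ → ℕ → ℝ) :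
    (∀ k ∈ Set.Icc (0 : ℝ) 1, MonotoneOn (fun T => interp N ρ T k) (Set.Icc (0 : ℝ) 1)) ↔
      (∀ i j : ℕ, i + 1 ≤ N → j ≤ N → ρ i j ≤ ρ (i + 1) j) := by
  have hNpos : (0 : ℝ) < N := Nat.cast_pos.2 hN
  have hh : (0 : ℝ) < 1 / N := one_div_pos.2 hNpos
  have hgrid : (N : ℝ) * (1 / N) = 1 := mul_one_div_cancel hNpos.ne'
  have hiff := forall_monotoneOn_hatInterp_hatInterp_iff (n := N) (m := N) (ρ := ρ) hh hh
  rw [hgrid] at hiff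
  simp only [interp_eq_hatInterp_hatInterp]
  exact hiff.trans (forall_congr' fun _ => forall_comm)
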